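/- There exists a universal constant C > 0 such that the following holds. Let G be a finite connected simple graph with m ≥ 1 edges and diameter d ≥ 1, and let w be a walk on G following the LFV-e policy. Then every edge of G has latency at most C·m·d under w: for every edge {a,b} of G and every time t ∈ ℕ there exists t' with t ≤ t' < t + C·m·d such that {w(t'),w(t'+1)} = {a,b}. -/

import Mathlib

/-!
Fix an even threshold `K` and call an edge light while it has been traversed fewer than `K` times.
The policy takes a light edge whenever one is available, so the walk alternates between stretches
on heavy edges and excursions on light ones. As in Euler's theorem, truncating all traversal counts
at `K` leaves only the two ends of the current excursion with an odd degree, and a vertex without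
light edges has an even one. Hence an excursion can only get stuck where it began, and then that
vertex has no light edge left. A vertex that still has a light edge has therefore been entered
through a heavy edge at most once, so none of its edges is more than one traversal above `K`.

Letting `K` vary, the counts of two edges with a common vertex differ by at most 3, hence those of
any two edges by at most `3 * (d + 1)`. If one edge is idle during a window, every other edge then
gains at most twice that, which bounds the length of the window.
-/

open scoped Finset

section VisitCount

variable {α : Type*} {x : ℕ → α}

/-- The number of visits of the sequence `x` to `a` before time `t`. It is a function of `a` for
fixed `t`, so that one step of the sequence adds a `Pi.single`. -/
noncomputable def visitCount (x : ℕ → α) (t : ℕ) (a : α) : ℕ :=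
  {t' : ℕ | t' < t ∧ x t' = a}.ncard

theorem visitCount_eq_count [DecidableEq α] (x : ℕ → α) (t : ℕ) (a : α) :
    visitCount x t a = Nat.count (fun t' ↦ x t' = a) t := by
  rw [visitCount, Nat.count_eq_card_filter_range, ← Set.ncard_coe_finset]
  simp

theorem visitCount_zero (x : ℕ → α) : visitCount x 0 = 0 := by
  ext a
  simp [visitCount]

theorem visitCount_succ [DecidableEq α] (x : ℕ → α) (t : ℕ) :
    visitCount x (t + 1) = visitCount x t + Pi.single (x t) 1 := by
  ext a
  simp only [visitCount_eq_count, Nat.count_succ, Pi.add_apply, Pi.single_apply, eq_comm]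

theorem visitCount_add_of_forall_ne {t n : ℕ} {a : α}
    (h : ∀ k < n, x (t + k) ≠ a) : visitCount x (t + n) a = visitCount x t a := by
  classical
  rw [visitCount_eq_count, visitCount_eq_count, Nat.count_add, Nat.add_eq_left]
  exact Nat.count_of_forall_not h

theorem sum_visitCount {s : Finset α} (hx : ∀ t, x t ∈ s) (t : ℕ) :
    ∑ a ∈ s, visitCount x t a = t := by
  classical
  simp only [visitCount_eq_count, Nat.count_eq_card_filter_range]
  rw [← Finset.card_eq_sum_card_fiberwise fun t' _ ↦ hx t', Finset.card_range]

theorem exists_visit_of_visitCount_le_add {s : Finset α} {D : ℕ} (hx : ∀ t, x t ∈ s)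
    (hD : ∀ t, ∀ a ∈ s, ∀ b ∈ s, visitCount x t a ≤ visitCount x t b + D)
    {a : α} (ha : a ∈ s) (t : ℕ) : ∃ t', t ≤ t' ∧ t' ≤ t + 2 * D * #s ∧ x t' = a := by
  by_contra! hidle
  let n := 2 * D * #s + 1
  have hcount : visitCount x (t + n) a = visitCount x t a :=
    visitCount_add_of_forall_ne fun k hk ↦ hidle (t + k) (by lia) (by lia)
  have hgain : ∀ b ∈ s, visitCount x (t + n) b ≤ visitCount x t b + 2 * D := fun b hb ↦
    calc visitCount x (t + n) b ≤ visitCount x (t + n) a + D := hD _ b hb a ha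
      _ = visitCount x t a + D := by rw [hcount]
      _ ≤ visitCount x t b + D + D := by gcongr; exact hD _ a ha b hb
      _ = visitCount x t b + 2 * D := by ring
  have hlength : t + n ≤ t + #s * (2 * D) :=
    calc t + n = ∑ b ∈ s, visitCount x (t + n) b := (sum_visitCount hx _).symm
      _ ≤ ∑ b ∈ s, (visitCount x t b + 2 * D) := Finset.sum_le_sum hgain
      _ = t + #s * (2 * D) := by
        rw [Finset.sum_add_distrib, sum_visitCount hx, Finset.sum_const, smul_eq_mul]
  lia

end VisitCount

section CappedDegree

variable {V : Type*} [DecidableEq V] {G : SimpleGraph V} [G.LocallyFinite] {f : Sym2 V → ℕ}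
  {K : ℕ} {e : Sym2 V} {v : V}

/-- The degree of `v` when every edge `e` is given the multiplicity `f e`, truncated at `K`. -/
def cappedDegree (G : SimpleGraph V) [G.LocallyFinite] (f : Sym2 V → ℕ) (K : ℕ) (v : V) : ℕ :=
  ∑ e ∈ G.incidenceFinset v, min (f e) K

theorem cappedDegree_add_single_of_lt (he : e ∈ G.edgeSet) (hlt : f e < K) (v : V) :
    cappedDegree G (f + Pi.single e 1) K v = cappedDegree G f K v + if v ∈ e then 1 else 0 := by
  have hmin (e' : Sym2 V) :
      min ((f + Pi.single e 1 : Sym2 V → ℕ) e') K = min (f e') K + if e = e' then 1 else 0 := by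
    rw [Pi.add_apply, Pi.single_apply]
    grind
  have hmem : e ∈ G.incidenceFinset v ↔ v ∈ e :=
    (G.mem_incidenceFinset v e).trans (and_iff_right he)
  simp only [cappedDegree, hmin, Finset.sum_add_distrib, Finset.sum_ite_eq, hmem]

theorem even_cappedDegree_add_single_iff_of_lt (he : e ∈ G.edgeSet) (hlt : f e < K) (v : V) :
    Even (cappedDegree G (f + Pi.single e 1) K v) ↔ (Even (cappedDegree G f K v) ↔ v ∉ e) := by
  rw [cappedDegree_add_single_of_lt he hlt, Nat.even_add]
  split_ifs with hv <;> simp [hv]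

theorem cappedDegree_add_single_of_le (hle : K ≤ f e) (v : V) :
    cappedDegree G (f + Pi.single e 1) K v = cappedDegree G f K v := by
  refine Finset.sum_congr rfl fun e' _ ↦ ?_
  rw [Pi.add_apply, Pi.single_apply]
  grind

theorem even_cappedDegree_of_forall_le (hK : Even K) (hv : ∀ e ∈ G.incidenceSet v, K ≤ f e) :
    Even (cappedDegree G f K v) := by
  refine Finset.even_sum _ fun e he ↦ ?_
  rwa [min_eq_right (hv e ((G.mem_incidenceFinset v e).mp he))]

end CappedDegree

section Excursion

variable {V : Type*} [DecidableEq V] {G : SimpleGraph V} [G.LocallyFinite] {f : Sym2 V → ℕ}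
  {K : ℕ} {o p q : V}

/-- The invariant of a least-frequently-visited-edge walk that is at `p` after traversing each edge
`e` exactly `f e` times: `o` is where its current excursion on edges with `f e < K` began. Between
two excursions, `o = p`. -/
structure IsExcursion (G : SimpleGraph V) [G.LocallyFinite] (f : Sym2 V → ℕ) (K : ℕ)
    (o p : V) : Prop where
  even_cappedDegree_iff (v : V) : Even (cappedDegree G f K v) ↔ (v = o ↔ v = p)
  le_of_lt ⦃v : V⦄ ⦃e : Sym2 V⦄ (he : e ∈ G.incidenceSet v) (hlt : f e < K)
    ⦃e' : Sym2 V⦄ (he' : e' ∈ G.incidenceSet v) : f e' ≤ K + if v = o then 1 else 0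

namespace IsExcursion

theorem zero (G : SimpleGraph V) [G.LocallyFinite] (K : ℕ) (p : V) : IsExcursion G 0 K p p where
  even_cappedDegree_iff v := by simp [cappedDegree]
  le_of_lt _ _ _ _ _ _ := Nat.zero_le _

theorem add_single_of_lt (h : IsExcursion G f K o p) (hpq : G.Adj p q) (hlt : f s(p, q) < K) :
    IsExcursion G (f + Pi.single s(p, q) 1) K o q where
  even_cappedDegree_iff v := by
    have hne : p ≠ q := hpq.ne
    rw [even_cappedDegree_add_single_iff_of_lt hpq hlt, h.even_cappedDegree_iff, Sym2.mem_iff]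
    grind
  le_of_lt v e he hlt' e' he' := by
    have hle := h.le_of_lt he (lt_of_le_of_lt (Nat.le_add_right _ _) hlt') he'
    rcases eq_or_ne e' s(p, q) with rfl | hne
    · rw [Pi.add_apply, Pi.single_eq_same]
      exact le_add_right hlt
    · rwa [Pi.add_apply, Pi.single_eq_of_ne hne, add_zero]

theorem eq_of_forall_le (h : IsExcursion G f K o p) (hK : Even K)
    (hp : ∀ e ∈ G.incidenceSet p, K ≤ f e) : p = o :=
  ((h.even_cappedDegree_iff p).mp (even_cappedDegree_of_forall_le hK hp)).mpr rfl

theorem add_single_of_forall_le (h : IsExcursion G f K o p) (hK : Even K) (hpq : G.Adj p q)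
    (hp : ∀ e ∈ G.incidenceSet p, K ≤ f e) :
    IsExcursion G (f + Pi.single s(p, q) 1) K q q := by
  obtain rfl : p = o := h.eq_of_forall_le hK hp
  constructor
  · intro v
    rw [cappedDegree_add_single_of_le (hp _ (G.mk'_mem_incidenceSet_left_iff.mpr hpq)),
      h.even_cappedDegree_iff, iff_self, iff_self]
  · intro v e he hlt e' he'
    replace hlt : f e < K := lt_of_le_of_lt (Nat.le_add_right _ _) hlt
    have hvp : v ≠ p := by
      rintro rfl
      exact hlt.not_ge (hp e he)
    have hle : f e' ≤ K := by simpa [hvp] using h.le_of_lt he hlt he'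
    rcases eq_or_ne e' s(p, q) with rfl | hne
    · obtain rfl : v = q := (Sym2.mem_iff.mp he'.2).resolve_left hvp
      rw [Pi.add_apply, Pi.single_eq_same, if_pos rfl]
      gcongr
    · rw [Pi.add_apply, Pi.single_eq_of_ne hne, add_zero]
      exact le_add_right hle

end IsExcursion

end Excursion

section LFVe

variable {V : Type*} {G : SimpleGraph V} {w : ℕ → V}

/-- The edge that `w` traverses between times `t` and `t + 1`. -/
def walkEdge (w : ℕ → V) (t : ℕ) : Sym2 V := s(w t, w (t + 1))

/-- `w` is a walk on `G` following the LFV-e policy. -/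
structure IsLFVeWalk (G : SimpleGraph V) (w : ℕ → V) : Prop where
  adj (t : ℕ) : G.Adj (w t) (w (t + 1))
  visitCount_le (t : ℕ) (u : V) (h : G.Adj (w t) u) :
    visitCount (walkEdge w) t (walkEdge w t) ≤ visitCount (walkEdge w) t s(w t, u)

theorem le_add_mul_length_of_incident {f : Sym2 V → ℕ} {D : ℕ}
    (hf : ∀ v, ∀ e ∈ G.incidenceSet v, ∀ e' ∈ G.incidenceSet v, f e' ≤ f e + D)
    {u v : V} (p : G.Walk u v) {e e' : Sym2 V} (he : e ∈ G.incidenceSet u)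
    (he' : e' ∈ G.incidenceSet v) : f e' ≤ f e + D * (p.length + 1) := by
  induction p generalizing e with
  | nil => simpa using hf _ e he e' he'
  | @cons u u' v hadj p ih =>
    calc f e' ≤ f s(u, u') + D * (p.length + 1) :=
          ih (G.mk'_mem_incidenceSet_right_iff.mpr hadj) he'
      _ ≤ f e + D + D * (p.length + 1) := by
          gcongr
          exact hf u e he _ (G.mk'_mem_incidenceSet_left_iff.mpr hadj)
      _ = f e + D * ((p.cons hadj).length + 1) := by
          rw [SimpleGraph.Walk.length_cons]
          ring

namespace IsLFVeWalk

theorem visitCount_le_of_mem_incidenceSet (hw : IsLFVeWalk G w) (t : ℕ) {e : Sym2 V}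
    (he : e ∈ G.incidenceSet (w t)) :
    visitCount (walkEdge w) t (walkEdge w t) ≤ visitCount (walkEdge w) t e := by
  obtain ⟨u, rfl⟩ := Sym2.mem_iff_exists.mp he.2
  exact hw.visitCount_le t u he.1

theorem exists_isExcursion [DecidableEq V] [G.LocallyFinite] (hw : IsLFVeWalk G w) {K : ℕ}
    (hK : Even K) (t : ℕ) : ∃ o, IsExcursion G (visitCount (walkEdge w) t) K o (w t) := by
  induction t with
  | zero => exact ⟨w 0, visitCount_zero (walkEdge w) ▸ .zero G K (w 0)⟩
  | succ t ih =>
    obtain ⟨o, ho⟩ := ih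
    rw [visitCount_succ]
    rcases lt_or_ge (visitCount (walkEdge w) t (walkEdge w t)) K with hlight | hheavy
    · exact ⟨o, ho.add_single_of_lt (hw.adj t) hlight⟩
    · exact ⟨w (t + 1), ho.add_single_of_forall_le hK (hw.adj t) fun e he ↦
        hheavy.trans (hw.visitCount_le_of_mem_incidenceSet t he)⟩

theorem visitCount_le_add_three [G.LocallyFinite] (hw : IsLFVeWalk G w) (t : ℕ) (v : V)
    (e : Sym2 V) (he : e ∈ G.incidenceSet v) (e' : Sym2 V) (he' : e' ∈ G.incidenceSet v) :
    visitCount (walkEdge w) t e' ≤ visitCount (walkEdge w) t e + 3 := by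
  classical
  set c := visitCount (walkEdge w) t e
  obtain ⟨K, hK, hlt, hle⟩ : ∃ K, Even K ∧ c < K ∧ K ≤ c + 2 := by
    rcases Nat.even_or_odd c with hc | hc
    · exact ⟨c + 2, hc.add even_two, by lia, le_rfl⟩
    · exact ⟨c + 1, hc.add_one, by lia, by lia⟩
  obtain ⟨o, ho⟩ := hw.exists_isExcursion hK t
  have hexcess := ho.le_of_lt he hlt he'
  split_ifs at hexcess <;> lia

theorem visitCount_le_add_of_dist_le [G.LocallyFinite] (hw : IsLFVeWalk G w) (hG : G.Connected)
    {d : ℕ} (hd : ∀ u v, G.dist u v ≤ d) (t : ℕ) {e e' : Sym2 V} (he : e ∈ G.edgeSet)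
    (he' : e' ∈ G.edgeSet) :
    visitCount (walkEdge w) t e' ≤ visitCount (walkEdge w) t e + 3 * (d + 1) := by
  obtain ⟨u, hu⟩ : ∃ u, u ∈ e := ⟨_, e.out_fst_mem⟩
  obtain ⟨v, hv⟩ : ∃ v, v ∈ e' := ⟨_, e'.out_fst_mem⟩
  obtain ⟨p, hp⟩ := hG.exists_walk_length_eq_dist u v
  calc visitCount (walkEdge w) t e'
      ≤ visitCount (walkEdge w) t e + 3 * (p.length + 1) :=
        le_add_mul_length_of_incident (hw.visitCount_le_add_three t) p ⟨he, hu⟩ ⟨he', hv⟩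
    _ ≤ visitCount (walkEdge w) t e + 3 * (d + 1) := by
        gcongr
        exact hp ▸ hd u v

theorem exists_traversal [Finite V] (hw : IsLFVeWalk G w) (hG : G.Connected) {d : ℕ}
    (hd : ∀ u v, G.dist u v ≤ d) {e : Sym2 V} (he : e ∈ G.edgeSet) (t : ℕ) :
    ∃ t', t ≤ t' ∧ t' ≤ t + 6 * G.edgeSet.ncard * (d + 1) ∧ walkEdge w t' = e := by
  classical
  have := Fintype.ofFinite V
  obtain ⟨t', hstart, hend, hvisit⟩ := exists_visit_of_visitCount_le_add
    (x := walkEdge w) (s := G.edgeFinset) (D := 3 * (d + 1))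
    (fun t ↦ G.mem_edgeFinset.mpr (hw.adj t))
    (fun t a ha b hb ↦ hw.visitCount_le_add_of_dist_le hG hd t
      (G.mem_edgeFinset.mp hb) (G.mem_edgeFinset.mp ha))
    (G.mem_edgeFinset.mpr he) t
  refine ⟨t', hstart, hend.trans_eq ?_, hvisit⟩
  rw [← G.coe_edgeFinset, Set.ncard_coe_finset]
  ring

end IsLFVeWalk

end LFVe

/-- There is a universal constant `C > 0` such that for every finite connected simple
graph `G` with `m ≥ 1` edges and diameter `d ≥ 1` and every walk `w` on `G` following the
LFV-e policy, every edge of `G` is traversed in every time window of length `C * m * d`. -/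
theorem lfv_e_edge_latency :
    ∃ C : ℝ, 0 < C ∧
      ∀ (V : Type) [Fintype V] (G : SimpleGraph V), G.Connected →
        ∀ m : ℕ, m = G.edgeSet.ncard → 1 ≤ m →
        -- `d` is the diameter of `G`
        ∀ d : ℕ, IsGreatest {k : ℕ | ∃ u v : V, G.dist u v = k} d → 1 ≤ d →
        ∀ w : ℕ → V,
          -- `w` is a walk on `G`
          (∀ t : ℕ, G.Adj (w t) (w (t + 1))) →
          -- `w` follows the LFV-e policy
          (∀ t : ℕ, ∀ u : V, G.Adj (w t) u →
            {t' : ℕ | t' < t ∧ s(w t', w (t' + 1)) = s(w t, w (t + 1))}.ncard ≤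
              {t' : ℕ | t' < t ∧ s(w t', w (t' + 1)) = s(w t, u)}.ncard) →
          ∀ a b : V, G.Adj a b → ∀ t : ℕ,
            ∃ t' : ℕ, t ≤ t' ∧ (t' : ℝ) < (t : ℝ) + C * m * d ∧
              s(w t', w (t' + 1)) = s(a, b) := by
  refine ⟨13, by norm_num, ?_⟩
  intro V _ G hG m hm hm_pos d hd hd_pos w hadj hpolicy a b hab t
  have hw : IsLFVeWalk G w := ⟨hadj, hpolicy⟩
  obtain ⟨t', hstart, hend, hedge⟩ :=
    hw.exists_traversal hG (fun u v ↦ hd.2 ⟨u, v, rfl⟩) (G.mem_edgeSet.mpr hab) t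
  refine ⟨t', hstart, ?_, hedge⟩
  have hwindow : 6 * m * (d + 1) < 13 * m * d :=
    calc 6 * m * (d + 1) ≤ 6 * m * (d + d) := by gcongr
      _ = 12 * (m * d) := by ring
      _ < 13 * (m * d) := by gcongr; norm_num
      _ = 13 * m * d := by ring
  rw [← hm] at hend
  exact_mod_cast hend.trans_lt (by gcongr)
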